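/- arXiv:2602.08721 — 2 statements merged into one kernel-verified Lean document; each statement's English description precedes it below -/
import Mathlib

section
/- The series identity ∑_{n≥1} (−1/4)^n · (1)_n / ((1/2)_n) · ( H_n^{(2)}/n³ − 9/(5 n^5) ) = (2/5) ζ(5) holds, where ζ is the Riemann zeta function. -/
/-- The rising factorial (Pochhammer symbol) `(a)ₙ = a(a+1)⋯(a+n-1)`. -/
noncomputable def risingFactorial (a : ℝ) (n : ℕ) : ℝ :=
  ∏ i ∈ Finset.range n, (a + i)

/-- The generalized harmonic number `H_n^{(s)} = ∑_{k=1}^n 1/k^s`. -/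
noncomputable def genHarmonic (s n : ℕ) : ℝ :=
  ∑ k ∈ Finset.range n, 1 / ((k : ℝ) + 1) ^ s

open Filter Topology

/-- `(n + k)! / (n - k)!`, the product of the `2k` integers from `n - k + 1` to `n + k`. -/
noncomputable def centralProd (n k : ℕ) : ℝ :=
  (n.descFactorial k : ℝ) * ((n + 1).ascFactorial k : ℝ)

/-- The constant coefficient `(-1)^k k!²` of `∏_{m=1}^k (X - m²)`. -/
noncomputable def signedFactorialSq (k : ℕ) : ℝ :=
  (-1) ^ k * (k.factorial : ℝ) ^ 2

theorem centralProd_zero (n : ℕ) : centralProd n 0 = 1 := by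
  simp [centralProd]

theorem centralProd_succ {n k : ℕ} (h : k ≤ n) :
    centralProd n (k + 1) = centralProd n k * ((n : ℝ) - k) * ((n : ℝ) + 1 + k) := by
  simp only [centralProd, Nat.descFactorial_succ, Nat.ascFactorial_succ]
  push_cast [Nat.cast_sub h]
  ring

theorem centralProd_pos {n k : ℕ} (h : k ≤ n) : 0 < centralProd n k := by
  have h1 : 0 < n.descFactorial k := Nat.descFactorial_pos.2 h
  have h2 : 0 < (n + 1).ascFactorial k := Nat.ascFactorial_pos _ _
  unfold centralProd
  positivity

theorem centralProd_succ_left {n k : ℕ} (h : k ≤ n + 1) :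
    centralProd (n + 1) k * ((n : ℝ) + 1 - k) = centralProd n k * ((n : ℝ) + 1 + k) := by
  induction k with
  | zero => simp [centralProd_zero]
  | succ k ih =>
    have hk : k ≤ n := by omega
    rw [centralProd_succ (by omega : k ≤ n + 1), centralProd_succ hk]
    have := ih (by omega)
    push_cast
    linear_combination ((n : ℝ) - k) * ((n : ℝ) + 2 + k) * this

theorem signedFactorialSq_succ (k : ℕ) :
    signedFactorialSq (k + 1) = -((k : ℝ) + 1) ^ 2 * signedFactorialSq k := by
  simp only [signedFactorialSq, Nat.factorial_succ]
  push_cast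
  ring

theorem genHarmonic_succ (s n : ℕ) :
    genHarmonic s (n + 1) = genHarmonic s n + 1 / ((n : ℝ) + 1) ^ s := by
  simp [genHarmonic, Finset.sum_range_succ]

theorem genHarmonic_nonneg (s n : ℕ) : 0 ≤ genHarmonic s n :=
  Finset.sum_nonneg fun _ _ => by positivity

theorem genHarmonic_le (s n : ℕ) : genHarmonic s n ≤ n := by
  have h : genHarmonic s n ≤ ∑ _k ∈ Finset.range n, (1 : ℝ) := by
    refine Finset.sum_le_sum fun k _ => ?_
    rw [div_le_one (by positivity)]
    exact one_le_pow₀ (by linarith [(Nat.cast_nonneg k : (0 : ℝ) ≤ k)])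
  simpa using h

/-- The `x²`-coefficient of the partial fraction type expansion of `1 / (n (n² - x²))`. -/
theorem one_div_pow_five_eq {n K : ℕ} (h : K < n) :
    1 / (n : ℝ) ^ 5 =
      (∑ j ∈ Finset.range K, -(signedFactorialSq j * genHarmonic 2 j) /
        (((n : ℝ) - (j + 1)) * centralProd n (j + 1))) +
      signedFactorialSq K * (1 / (n : ℝ) ^ 4 - genHarmonic 2 K / (n : ℝ) ^ 2) /
        (((n : ℝ) - K) * centralProd n K) := by
  induction K with
  | zero =>
    have hn : (n : ℝ) ≠ 0 := by exact_mod_cast h.ne'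
    simp [centralProd_zero, signedFactorialSq, genHarmonic]
    field_simp
  | succ k ih =>
    rw [ih (by omega), Finset.sum_range_succ, add_assoc]
    congr 1
    rw [centralProd_succ (by omega : k ≤ n), signedFactorialSq_succ, genHarmonic_succ]
    have hD : centralProd n k ≠ 0 := (centralProd_pos (by omega)).ne'
    have hn : (n : ℝ) ≠ 0 := by
      have : n ≠ 0 := by omega
      exact_mod_cast this
    have h' : (k : ℝ) + 1 < n := by exact_mod_cast h
    have h1 : (n : ℝ) - k ≠ 0 := by linarith
    have h2 : (n : ℝ) - (k + 1) ≠ 0 := by linarith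
    have h3 : (n : ℝ) + 1 + k ≠ 0 := by positivity
    have h4 : (k : ℝ) + 1 ≠ 0 := by positivity
    push_cast
    field_simp
    ring

/-- The summand of the accelerated series for `ζ(5)`. -/
noncomputable def zetaFiveTerm (i : ℕ) : ℝ :=
  signedFactorialSq i * (1 / ((i : ℝ) + 1) ^ 4 - genHarmonic 2 i / ((i : ℝ) + 1) ^ 2) /
      centralProd (i + 1) i -
    signedFactorialSq i * genHarmonic 2 i / (2 * ((i : ℝ) + 1) * centralProd (i + 1) (i + 1))

/-- The difference of the partial sums of `∑ 1 / n^5` and of the accelerated series. -/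
noncomputable def zetaFiveRemainder (N : ℕ) : ℝ :=
  ∑ j ∈ Finset.range N,
    signedFactorialSq j * genHarmonic 2 j / (2 * ((j : ℝ) + 1) * centralProd N (j + 1))

theorem sum_one_div_pow_five (N : ℕ) :
    ∑ i ∈ Finset.range N, 1 / ((i : ℝ) + 1) ^ 5 =
      ∑ i ∈ Finset.range N, zetaFiveTerm i + zetaFiveRemainder N := by
  induction N with
  | zero => simp [zetaFiveRemainder]
  | succ N ih =>
    have key := one_div_pow_five_eq (Nat.lt_succ_self N)
    have hdiff : ∑ j ∈ Finset.range N, -(signedFactorialSq j * genHarmonic 2 j) /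
          (((N + 1 : ℕ) : ℝ) - (j + 1)) / centralProd (N + 1) (j + 1) =
        ∑ j ∈ Finset.range N, signedFactorialSq j * genHarmonic 2 j /
          (2 * ((j : ℝ) + 1) * centralProd (N + 1) (j + 1)) - zetaFiveRemainder N := by
      rw [zetaFiveRemainder, ← Finset.sum_sub_distrib]
      refine Finset.sum_congr rfl fun j hj => ?_
      have hj' : j < N := Finset.mem_range.1 hj
      have hrec := centralProd_succ_left (n := N) (k := j + 1) (by omega)
      have hD : centralProd N (j + 1) ≠ 0 := (centralProd_pos (by omega)).ne'
      have hD' : centralProd (N + 1) (j + 1) ≠ 0 := (centralProd_pos (by omega)).ne'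
      have hlt : (j : ℝ) < N := by exact_mod_cast hj'
      have h1 : (N : ℝ) + 1 - (j + 1) ≠ 0 := by linarith
      have h2 : (j : ℝ) + 1 ≠ 0 := by positivity
      push_cast at hrec ⊢
      rw [div_div, div_sub_div _ _ (by positivity) (by positivity),
        div_eq_div_iff (by positivity) (by positivity)]
      linear_combination (2 * ((j : ℝ) + 1) * signedFactorialSq j * genHarmonic 2 j *
        centralProd (N + 1) (j + 1)) * hrec
    simp only [← div_div] at key hdiff
    rw [Finset.sum_range_succ, Finset.sum_range_succ, ih]
    rw [hdiff] at key
    rw [show zetaFiveRemainder (N + 1) = _ from Finset.sum_range_succ _ N]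
    simp only [zetaFiveTerm, ← div_div]
    push_cast at key
    rw [show (N : ℝ) + 1 - N = 1 by ring, div_one] at key
    linarith

theorem factorial_sq_le_centralProd {N k : ℕ} (hk : 1 ≤ k) (h : k ≤ N) :
    ((N : ℝ) + 1) * (k.factorial : ℝ) ^ 2 ≤ centralProd N k := by
  have h1 : k.factorial ≤ N.descFactorial k := by
    rw [Nat.descFactorial_eq_factorial_mul_choose]
    exact Nat.le_mul_of_pos_right _ (Nat.choose_pos h)
  have h2 : k.factorial * (N + 1) ≤ (N + 1).ascFactorial k := by
    rw [Nat.ascFactorial_eq_factorial_mul_choose]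
    refine Nat.mul_le_mul_left _ ?_
    calc N + 1 = (N + 1).choose N := by simp
      _ ≤ (N + k).choose N := Nat.choose_le_choose _ (by omega)
      _ = (N + k).choose k := Nat.choose_symm_add
  have h3 := Nat.mul_le_mul h1 h2
  have h4 : ((k.factorial * (k.factorial * (N + 1)) : ℕ) : ℝ) ≤
      ((N.descFactorial k * (N + 1).ascFactorial k : ℕ) : ℝ) := Nat.cast_le.2 h3
  push_cast at h4
  unfold centralProd
  linarith

theorem summable_one_div_add_one_pow {m : ℕ} (hm : 1 < m) :
    Summable fun i : ℕ => 1 / ((i : ℝ) + 1) ^ m := by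
  have := (summable_nat_add_iff 1).2 (Real.summable_one_div_nat_pow.2 hm)
  simpa using this

theorem abs_signedFactorialSq (k : ℕ) : |signedFactorialSq k| = (k.factorial : ℝ) ^ 2 := by
  simp [signedFactorialSq, abs_mul]

theorem abs_zetaFiveRemainder_le (N : ℕ) :
    |zetaFiveRemainder N| ≤ (∑' i : ℕ, 1 / ((i : ℝ) + 1) ^ 2) * (1 / ((N : ℝ) + 1)) := by
  have hterm : ∀ j ∈ Finset.range N,
      |signedFactorialSq j * genHarmonic 2 j / (2 * ((j : ℝ) + 1) * centralProd N (j + 1))| ≤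
        1 / ((j : ℝ) + 1) ^ 2 * (1 / ((N : ℝ) + 1)) := by
    intro j hj
    have hj' : j + 1 ≤ N := Finset.mem_range.1 hj
    have hpos := centralProd_pos hj'
    have hle := factorial_sq_le_centralProd (Nat.succ_pos j) hj'
    rw [abs_div, abs_mul, abs_signedFactorialSq, abs_of_nonneg (genHarmonic_nonneg 2 j),
      abs_of_pos (by positivity), div_mul_div_comm, div_le_div_iff₀ (by positivity) (by positivity)]
    have hH : genHarmonic 2 j ≤ (j : ℝ) + 1 := (genHarmonic_le 2 j).trans (by linarith)
    rw [Nat.factorial_succ] at hle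
    push_cast at hle
    calc (j.factorial : ℝ) ^ 2 * genHarmonic 2 j * (((j : ℝ) + 1) ^ 2 * ((N : ℝ) + 1))
        ≤ (j.factorial : ℝ) ^ 2 * ((j : ℝ) + 1) * (((j : ℝ) + 1) ^ 2 * ((N : ℝ) + 1)) := by
          gcongr
      _ = ((j : ℝ) + 1) * (((N : ℝ) + 1) * (((j : ℝ) + 1) * j.factorial) ^ 2) := by ring
      _ ≤ ((j : ℝ) + 1) * centralProd N (j + 1) := by gcongr
      _ ≤ 1 * 1 * (2 * ((j : ℝ) + 1) * centralProd N (j + 1)) := by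
          have : 0 ≤ ((j : ℝ) + 1) * centralProd N (j + 1) := by positivity
          linarith
  calc |zetaFiveRemainder N|
      ≤ ∑ j ∈ Finset.range N, 1 / ((j : ℝ) + 1) ^ 2 * (1 / ((N : ℝ) + 1)) :=
        (Finset.abs_sum_le_sum_abs _ _).trans (Finset.sum_le_sum hterm)
    _ = (∑ j ∈ Finset.range N, 1 / ((j : ℝ) + 1) ^ 2) * (1 / ((N : ℝ) + 1)) := by
        rw [Finset.sum_mul]
    _ ≤ _ := by
        gcongr
        exact (summable_one_div_add_one_pow one_lt_two).sum_le_tsum _ fun _ _ => by positivity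

theorem tendsto_zetaFiveRemainder : Tendsto zetaFiveRemainder atTop (𝓝 0) := by
  refine squeeze_zero_norm abs_zetaFiveRemainder_le ?_
  have h := (tendsto_one_div_add_atTop_nhds_zero_nat (𝕜 := ℝ)).const_mul
    (∑' i : ℕ, 1 / ((i : ℝ) + 1) ^ 2)
  rwa [mul_zero] at h

theorem centralProd_self_succ (n : ℕ) :
    centralProd (n + 1) (n + 1) = centralProd (n + 1) n * (2 * ((n : ℝ) + 1)) := by
  rw [centralProd_succ (Nat.le_succ n)]
  push_cast
  ring

theorem centralProd_succ_self (n : ℕ) :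
    centralProd (n + 1) n = centralProd n n * (2 * (n : ℝ) + 1) := by
  have := centralProd_succ_left (Nat.le_succ n)
  linear_combination this

theorem risingFactorial_succ (a : ℝ) (n : ℕ) :
    risingFactorial a (n + 1) = risingFactorial a n * (a + n) :=
  Finset.prod_range_succ _ _

theorem pow_mul_risingFactorial_div (n : ℕ) :
    (-1 / 4 : ℝ) ^ n * risingFactorial 1 n / risingFactorial (1 / 2) n =
      signedFactorialSq n / centralProd n n := by
  induction n with
  | zero => simp [risingFactorial, signedFactorialSq, centralProd_zero]
  | succ n ih =>
    have h2 : centralProd n n ≠ 0 := (centralProd_pos le_rfl).ne'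
    have h3 : (2 * (n : ℝ) + 1) ≠ 0 := by positivity
    have h4 : (n : ℝ) + 1 ≠ 0 := by positivity
    calc (-1 / 4 : ℝ) ^ (n + 1) * risingFactorial 1 (n + 1) / risingFactorial (1 / 2) (n + 1)
        = (-1 / 4 : ℝ) ^ n * risingFactorial 1 n / risingFactorial (1 / 2) n *
            (-1 / 4 * (1 + n) / (1 / 2 + n)) := by
          rw [risingFactorial_succ, risingFactorial_succ, pow_succ, div_mul_div_comm]
          ring
      _ = _ := by
          rw [ih, centralProd_self_succ, centralProd_succ_self, signedFactorialSq_succ,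
            show (1 / 2 + (n : ℝ)) = (2 * n + 1) / 2 by ring]
          field_simp
          ring

theorem summand_eq_zetaFiveTerm (n : ℕ) :
    (-1 / 4 : ℝ) ^ (n + 1) * risingFactorial 1 (n + 1) / risingFactorial (1 / 2) (n + 1) *
      (genHarmonic 2 (n + 1) / ((n : ℝ) + 1) ^ 3 - 9 / (5 * ((n : ℝ) + 1) ^ 5)) =
      2 / 5 * zetaFiveTerm n := by
  have h2 : centralProd (n + 1) n ≠ 0 := (centralProd_pos (Nat.le_succ n)).ne'
  have h4 : (n : ℝ) + 1 ≠ 0 := by positivity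
  rw [pow_mul_risingFactorial_div, zetaFiveTerm, centralProd_self_succ, signedFactorialSq_succ,
    genHarmonic_succ]
  field_simp
  ring

theorem summable_zetaFiveTerm : Summable zetaFiveTerm := by
  refine Summable.of_norm_bounded
    ((summable_one_div_add_one_pow one_lt_two).mul_left 7) fun n => ?_
  have heq := summand_eq_zetaFiveTerm n
  rw [pow_mul_risingFactorial_div] at heq
  have hr : |signedFactorialSq (n + 1) / centralProd (n + 1) (n + 1)| ≤ 1 := by
    have hle := factorial_sq_le_centralProd (Nat.succ_pos n) le_rfl
    have hpos := centralProd_pos (le_refl (n + 1))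
    rw [abs_div, abs_signedFactorialSq, abs_of_pos hpos, div_le_one hpos]
    refine le_trans (le_mul_of_one_le_left (by positivity) ?_) hle
    linarith [(Nat.cast_nonneg (n + 1) : (0 : ℝ) ≤ (n + 1 : ℕ))]
  have hx : (1 : ℝ) ≤ (n : ℝ) + 1 := by linarith [(Nat.cast_nonneg n : (0 : ℝ) ≤ n)]
  have hH : |genHarmonic 2 (n + 1) / ((n : ℝ) + 1) ^ 3| ≤ 1 / ((n : ℝ) + 1) ^ 2 := by
    rw [abs_of_nonneg (div_nonneg (genHarmonic_nonneg _ _) (by positivity)),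
      div_le_div_iff₀ (by positivity) (by positivity)]
    have hle := genHarmonic_le 2 (n + 1)
    push_cast at hle
    calc genHarmonic 2 (n + 1) * ((n : ℝ) + 1) ^ 2
        ≤ ((n : ℝ) + 1) * ((n : ℝ) + 1) ^ 2 := by gcongr
      _ = 1 * ((n : ℝ) + 1) ^ 3 := by ring
  have h9 : |9 / (5 * ((n : ℝ) + 1) ^ 5)| ≤ 9 / 5 * (1 / ((n : ℝ) + 1) ^ 2) := by
    rw [abs_of_nonneg (by positivity), ← div_div, div_eq_mul_one_div]
    gcongr
    norm_num
  have hsub := (abs_sub (genHarmonic 2 (n + 1) / ((n : ℝ) + 1) ^ 3)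
    (9 / (5 * ((n : ℝ) + 1) ^ 5))).trans (add_le_add hH h9)
  have hmul := mul_le_mul hr hsub (abs_nonneg _) zero_le_one
  rw [← abs_mul, heq, abs_mul, abs_of_pos (by norm_num : (0 : ℝ) < 2 / 5)] at hmul
  rw [Real.norm_eq_abs]
  linarith

theorem hasSum_zetaFiveTerm : HasSum zetaFiveTerm (∑' i : ℕ, 1 / ((i : ℝ) + 1) ^ 5) := by
  rw [summable_zetaFiveTerm.hasSum_iff_tendsto_nat]
  have h := (summable_one_div_add_one_pow (by norm_num : 1 < 5)).hasSum.tendsto_sum_nat.sub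
    tendsto_zetaFiveRemainder
  rw [sub_zero] at h
  refine h.congr fun N => ?_
  rw [sum_one_div_pow_five, add_sub_cancel_right]

theorem riemannZeta_five_eq : riemannZeta 5 = ((∑' i : ℕ, 1 / ((i : ℝ) + 1) ^ 5 : ℝ) : ℂ) := by
  rw [zeta_eq_tsum_one_div_nat_add_one_cpow (by norm_num), Complex.ofReal_tsum]
  refine tsum_congr fun n => ?_
  push_cast
  norm_cast

/-- `∑_{n≥1} (−1/4)^n (1)ₙ/(1/2)ₙ (H_n^{(2)}/n³ − 9/(5n^5)) = (2/5)ζ(5)`. -/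
theorem harmonic2_zeta5_series :
    ∑' n : ℕ, ((((-1 / 4 : ℝ) ^ (n + 1) * risingFactorial 1 (n + 1) /
        risingFactorial (1 / 2) (n + 1) *
        (genHarmonic 2 (n + 1) / ((n : ℝ) + 1) ^ 3 - 9 / (5 * ((n : ℝ) + 1) ^ 5)) : ℝ)) : ℂ)
      = 2 / 5 * riemannZeta 5 := by
  simp_rw [summand_eq_zetaFiveTerm]
  rw [← Complex.ofReal_tsum, tsum_mul_left, hasSum_zetaFiveTerm.tsum_eq, riemannZeta_five_eq]
  push_cast
  rfl
end

section
/- The series identity ∑_{n≥1} (−1/4)^n · (1)_n / ((1/2)_n) · (10n − 3)/(n² (2n−1)) = −π²/3 holds. -/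
open Filter Topology
open scoped Nat

theorem risingFactorial_one (n : ℕ) : risingFactorial 1 n = (n ! : ℝ) := by
  induction n with
  | zero => simp [risingFactorial]
  | succ n ih =>
    have h : risingFactorial 1 (n + 1) = risingFactorial 1 n * (1 + n) :=
      Finset.prod_range_succ _ _
    rw [h, ih, Nat.factorial_succ]
    push_cast
    ring

theorem four_pow_mul_risingFactorial_half (n : ℕ) :
    4 ^ n * (n ! : ℝ) * risingFactorial (1 / 2) n = ((2 * n)! : ℝ) := by
  induction n with
  | zero => simp [risingFactorial]
  | succ n ih =>
    have h : risingFactorial (1 / 2) (n + 1) = risingFactorial (1 / 2) n * (1 / 2 + n) :=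
      Finset.prod_range_succ _ _
    rw [h, show 2 * (n + 1) = 2 * n + 1 + 1 by ring, Nat.factorial_succ, Nat.factorial_succ,
      Nat.factorial_succ]
    push_cast
    rw [← ih]
    ring

/-- The first member of a Wilf–Zeilberger pair, with `wzF 0 k = 1 / (k + 1) ^ 2`. -/
noncomputable def wzF (n k : ℕ) : ℝ :=
  (-1) ^ n * (n ! : ℝ) ^ 2 * (k ! : ℝ) / (((k : ℝ) + n + 1) * ((k + 2 * n + 1)! : ℝ))

/-- The second member of the Wilf–Zeilberger pair. -/
noncomputable def wzG (n k : ℕ) : ℝ :=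
  (-1) ^ n * (n ! : ℝ) ^ 2 * (k ! : ℝ) / ((k + 2 * n + 2)! : ℝ) *
    (((k : ℝ) + 3 * n + 5 / 2) / (2 * n + 1) + (n + 1) / ((k : ℝ) + n + 1))

theorem wzF_sub_wzF_succ (n k : ℕ) :
    wzF n k - wzF (n + 1) k = wzG n k - wzG n (k + 1) := by
  have hf : ((k + 2 * n + 1)! : ℝ) ≠ 0 := by positivity
  have h2 : ((k + 2 * n + 2)! : ℝ) = (k + 2 * n + 2) * ((k + 2 * n + 1)! : ℝ) := by
    rw [Nat.factorial_succ]; push_cast; ring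
  have h3 : ((k + 2 * n + 3)! : ℝ) =
      (k + 2 * n + 3) * ((k + 2 * n + 2) * ((k + 2 * n + 1)! : ℝ)) := by
    rw [Nat.factorial_succ, ← h2]; push_cast; ring
  have p1 : (k : ℝ) + n + 1 ≠ 0 := by positivity
  have p2 : (k : ℝ) + n + 2 ≠ 0 := by positivity
  have p3 : (k : ℝ) + 2 * n + 2 ≠ 0 := by positivity
  have p4 : (k : ℝ) + 2 * n + 3 ≠ 0 := by positivity
  have p5 : 2 * (n : ℝ) + 1 ≠ 0 := by positivity
  unfold wzF wzG
  rw [show k + 2 * (n + 1) + 1 = k + 2 * n + 3 by ring,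
    show k + 1 + 2 * n + 2 = k + 2 * n + 3 by ring, h3, h2, Nat.factorial_succ n,
    Nat.factorial_succ k]
  push_cast
  rw [show (k : ℝ) + (n + 1) + 1 = k + n + 2 by ring,
    show (k : ℝ) + 1 + n + 1 = k + n + 2 by ring]
  field_simp
  ring

theorem factorial_sq_mul_factorial_le (n k : ℕ) :
    (n ! : ℝ) ^ 2 * (k ! : ℝ) ≤ ((k + 2 * n)! : ℝ) := by
  have h1 : n ! * k ! ≤ (n + k)! :=
    Nat.le_of_dvd (Nat.factorial_pos _) (Nat.factorial_mul_factorial_dvd_factorial_add n k)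
  have h2 : n ! * (n + k)! ≤ (n + (n + k))! :=
    Nat.le_of_dvd (Nat.factorial_pos _) (Nat.factorial_mul_factorial_dvd_factorial_add n (n + k))
  have h : n ! ^ 2 * k ! ≤ (k + 2 * n)! := by
    calc n ! ^ 2 * k ! = n ! * (n ! * k !) := by ring
      _ ≤ n ! * (n + k)! := Nat.mul_le_mul_left _ h1
      _ ≤ (n + (n + k))! := h2
      _ = (k + 2 * n)! := by congr 1; ring
  exact_mod_cast h

theorem abs_wzF_le (n k : ℕ) : |wzF n k| ≤ 1 / (((k : ℝ) + n + 1) * (k + 1)) := by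
  have habs : |wzF n k| =
      (n ! : ℝ) ^ 2 * (k ! : ℝ) / (((k : ℝ) + n + 1) * ((k + 2 * n + 1)! : ℝ)) := by
    rw [wzF, mul_assoc, mul_div_assoc, abs_mul, abs_pow, abs_neg, abs_one, one_pow, one_mul,
      abs_of_nonneg (by positivity)]
  have h := factorial_sq_mul_factorial_le n k
  have hs : ((k + 2 * n + 1)! : ℝ) = (k + 2 * n + 1) * ((k + 2 * n)! : ℝ) := by
    rw [Nat.factorial_succ]; push_cast; ring
  rw [habs, div_le_div_iff₀ (by positivity) (by positivity), hs]
  have h' : (n ! : ℝ) ^ 2 * (k ! : ℝ) * (k + 1) ≤ (k + 2 * n + 1) * ((k + 2 * n)! : ℝ) := by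
    rw [mul_comm]
    gcongr
    linarith [(n.cast_nonneg : (0 : ℝ) ≤ n)]
  nlinarith [mul_le_mul_of_nonneg_left h' (by positivity : (0 : ℝ) ≤ (k : ℝ) + n + 1)]

theorem abs_wzF_le_sq (n k : ℕ) : |wzF n k| ≤ 1 / ((k : ℝ) + 1) ^ 2 := by
  refine (abs_wzF_le n k).trans ?_
  rw [sq]
  gcongr
  linarith [(n.cast_nonneg : (0 : ℝ) ≤ n)]

theorem hasSum_one_div_succ_sq :
    HasSum (fun k : ℕ => 1 / ((k : ℝ) + 1) ^ 2) (Real.pi ^ 2 / 6) := by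
  have h := (hasSum_nat_add_iff' (f := fun k : ℕ => 1 / (k : ℝ) ^ 2) 1).mpr hasSum_zeta_two
  simpa using h

theorem summable_wzF (n : ℕ) : Summable (wzF n) :=
  Summable.of_norm_bounded hasSum_one_div_succ_sq.summable fun k => abs_wzF_le_sq n k

theorem tendsto_tsum_wzF : Tendsto (fun n => ∑' k, wzF n k) atTop (𝓝 0) := by
  have h := tendsto_tsum_of_dominated_convergence (𝓕 := atTop) (f := wzF)
    (g := fun _ : ℕ => (0 : ℝ)) hasSum_one_div_succ_sq.summable
    (fun k => squeeze_zero_norm (fun n => ?_) tendsto_one_div_add_atTop_nhds_zero_nat)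
    (Eventually.of_forall fun n k => abs_wzF_le_sq n k)
  · simpa using h
  · refine (abs_wzF_le n k).trans ?_
    have hk : (0 : ℝ) ≤ k := k.cast_nonneg
    have hn : (0 : ℝ) ≤ n := n.cast_nonneg
    gcongr
    nlinarith

theorem abs_wzG_le (n k : ℕ) :
    |wzG n k| ≤ 1 / (((k : ℝ) + 2 * n + 1) * (k + 2 * n + 2)) *
      (((k : ℝ) + 3 * n + 5 / 2) / (2 * n + 1) + (n + 1) / ((k : ℝ) + n + 1)) := by
  have habs : |wzG n k| = (n ! : ℝ) ^ 2 * (k ! : ℝ) / ((k + 2 * n + 2)! : ℝ) *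
      (((k : ℝ) + 3 * n + 5 / 2) / (2 * n + 1) + (n + 1) / ((k : ℝ) + n + 1)) := by
    rw [wzG, mul_assoc, mul_div_assoc, mul_assoc, abs_mul, abs_pow, abs_neg, abs_one, one_pow,
      one_mul, abs_of_nonneg (by positivity)]
  have hs : ((k + 2 * n + 2)! : ℝ) =
      (k + 2 * n + 1) * (k + 2 * n + 2) * ((k + 2 * n)! : ℝ) := by
    rw [Nat.factorial_succ, Nat.factorial_succ]; push_cast; ring
  rw [habs, hs]
  refine mul_le_mul_of_nonneg_right ?_ (by positivity)
  rw [div_le_div_iff₀ (by positivity) (by positivity), one_mul, mul_comm]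
  gcongr
  exact factorial_sq_mul_factorial_le n k

theorem tendsto_wzG (n : ℕ) : Tendsto (wzG n) atTop (𝓝 0) := by
  have hlim : Tendsto (fun k : ℕ => (3 * (n : ℝ) + 4) * (1 / ((k : ℝ) + 1))) atTop (𝓝 0) := by
    simpa using tendsto_one_div_add_atTop_nhds_zero_nat.const_mul (3 * (n : ℝ) + 4)
  refine squeeze_zero_norm (fun k => (abs_wzG_le n k).trans ?_) hlim
  have hk : (0 : ℝ) ≤ k := k.cast_nonneg
  have hn : (0 : ℝ) ≤ n := n.cast_nonneg
  have h1 : ((k : ℝ) + 3 * n + 5 / 2) / (2 * n + 1) ≤ k + 3 * n + 5 / 2 :=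
    div_le_self (by positivity) (by linarith)
  have h2 : ((n : ℝ) + 1) / ((k : ℝ) + n + 1) ≤ 1 :=
    div_le_one_of_le₀ (by linarith) (by positivity)
  calc _ ≤ 1 / (((k : ℝ) + 1) * (k + 1)) * ((3 * n + 4) * (k + 1)) := by
        gcongr ?_ * ?_
        · gcongr <;> linarith
        · nlinarith [mul_nonneg hn hk]
    _ = _ := by field_simp

theorem wzG_zero_eq_sub (n : ℕ) :
    wzG n 0 = ∑' k, wzF n k - ∑' k, wzF (n + 1) k := by
  have hsum := ((summable_wzF n).hasSum.sub (summable_wzF (n + 1)).hasSum).tendsto_sum_nat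
  simp only [wzF_sub_wzF_succ, Finset.sum_range_sub'] at hsum
  have h := (tendsto_wzG n).const_sub (wzG n 0)
  rw [sub_zero] at h
  exact tendsto_nhds_unique h hsum

theorem summable_wzG_zero : Summable fun n => wzG n 0 := by
  refine Summable.of_norm_bounded (hasSum_one_div_succ_sq.summable.mul_left 4) fun n => ?_
  refine (abs_wzG_le n 0).trans ?_
  have hn : (0 : ℝ) ≤ n := n.cast_nonneg
  have h1 : (3 * (n : ℝ) + 5 / 2) / (2 * n + 1) ≤ 3 := by
    rw [div_le_iff₀ (by positivity)]; linarith
  have h2 : ((n : ℝ) + 1) / (n + 1) = 1 := div_self (by positivity)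
  push_cast
  simp only [zero_add, h2]
  calc _ ≤ 1 / (((n : ℝ) + 1) * (n + 1)) * (3 + 1) := by
        gcongr <;> linarith
    _ = _ := by ring

theorem hasSum_wzG_zero : HasSum (fun n => wzG n 0) (Real.pi ^ 2 / 6) := by
  have h0 : ∑' k, wzF 0 k = Real.pi ^ 2 / 6 := by
    rw [← hasSum_one_div_succ_sq.tsum_eq]
    refine tsum_congr fun k => ?_
    have hk : (k ! : ℝ) ≠ 0 := by positivity
    simp only [wzF, mul_zero, add_zero, Nat.factorial_succ]
    push_cast
    field_simp
    simp
  have hlim := tendsto_tsum_wzF.const_sub (∑' k, wzF 0 k)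
  rw [sub_zero, h0] at hlim
  have hpart := summable_wzG_zero.hasSum.tendsto_sum_nat
  simp only [wzG_zero_eq_sub, Finset.sum_range_sub' (fun n => ∑' k, wzF n k), h0] at hpart
  have hval := tendsto_nhds_unique hlim hpart
  simp only [← wzG_zero_eq_sub] at hval
  rw [hval]
  exact summable_wzG_zero.hasSum

theorem pi2_series_term (n : ℕ) :
    (-1 / 4 : ℝ) ^ (n + 1) * risingFactorial 1 (n + 1) / risingFactorial (1 / 2) (n + 1) *
        ((10 * ((n : ℝ) + 1) - 3) / (((n : ℝ) + 1) ^ 2 * (2 * ((n : ℝ) + 1) - 1)))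
      = -2 * wzG n 0 := by
  have hr := four_pow_mul_risingFactorial_half (n + 1)
  have hhalf : risingFactorial (1 / 2) (n + 1) = ((2 * n + 2)! : ℝ) / (4 ^ (n + 1) * (n + 1)!) := by
    rw [eq_div_iff (by positivity), show 2 * n + 2 = 2 * (n + 1) by ring, ← hr]
    ring
  have hq : 2 * (n : ℝ) + 1 ≠ 0 := by positivity
  rw [hhalf, risingFactorial_one, wzG, Nat.factorial_succ n, div_pow,
    show 2 * ((n : ℝ) + 1) - 1 = 2 * n + 1 by ring]
  push_cast
  simp only [zero_add, Nat.factorial_zero, Nat.cast_one]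
  field_simp
  ring

/-- `∑_{n≥1} (−1/4)^n (1)ₙ/(1/2)ₙ (10n−3)/(n²(2n−1)) = −π²/3`. -/
theorem pi2_series :
    ∑' n : ℕ, ((-1 / 4 : ℝ) ^ (n + 1) * risingFactorial 1 (n + 1) /
        risingFactorial (1 / 2) (n + 1) *
        ((10 * ((n : ℝ) + 1) - 3) / (((n : ℝ) + 1) ^ 2 * (2 * ((n : ℝ) + 1) - 1))))
      = -Real.pi ^ 2 / 3 := by
  simp only [pi2_series_term]
  rw [(hasSum_wzG_zero.mul_left (-2)).tsum_eq]
  ring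
end
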